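/- (Curvature sandwich bound.) Let V be a finite set and let f : 2^V → ℝ be a normalized, monotone, submodular set function. Let Y ⊆ V be nonempty with f({j}) > 0 for every j ∈ Y, and define the curvature κ_f(Y) := 1 − min_{j ∈ Y} ( f(Y) − f(Y \ {j}) ) / f({j}). Then f(Y) ≤ Σ_{j ∈ Y} f({j}) ≤ [ |Y| / ( 1 + (|Y| − 1)(1 − κ_f(Y)) ) ] · f(Y). -/

import Mathlib

/-!
Diminishing returns bound every marginal gain along a chain of subsets of `Y` from below by the
last marginal `f Y - f (Y.erase j)`, which is at least `c * f {j}` with `c = 1 - κ`. Building `Y`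
up from `{i}` therefore gives `f {i} + c * ∑ j ∈ Y.erase i, f {j} ≤ f Y`, and averaging over the
starting point `i ∈ Y` yields `(1 + (|Y| - 1) * c) * ∑ j ∈ Y, f {j} ≤ |Y| * f Y`.
-/

section

variable {V K : Type*} [DecidableEq V]

/-- Submodularity of a set function on the finite subsets of a possibly infinite type, with values
in any ordered additive structure. -/
def IsSubmodular [Add K] [LE K] (f : Finset V → K) : Prop :=
  ∀ X Y : Finset V, f (X ∪ Y) + f (X ∩ Y) ≤ f X + f Y

namespace IsSubmodular

theorem le_sum_singleton [AddCommMonoid K] [PartialOrder K] [IsOrderedAddMonoid K]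
    {f : Finset V → K} {A : Finset V} (hf : IsSubmodular f) (hempty : 0 ≤ f ∅) (hA : A.Nonempty) :
    f A ≤ ∑ j ∈ A, f {j} := by
  induction hA using Finset.Nonempty.cons_induction with
  | singleton j => rw [Finset.sum_singleton]
  | cons j A hj _ ih =>
    have hunion : f ({j} ∪ A) ≤ f {j} + f A := by
      have hinter := hf {j} A
      rw [Finset.singleton_inter_of_notMem hj] at hinter
      exact (le_add_of_nonneg_right hempty).trans hinter
    rw [Finset.sum_cons, Finset.cons_eq_insert, Finset.insert_eq]
    exact hunion.trans (by gcongr)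

section OrderedAddCommGroup

variable [AddCommGroup K] [PartialOrder K] [IsOrderedAddMonoid K] {f : Finset V → K}
  {A B Y : Finset V}

theorem sub_erase_anti (hf : IsSubmodular f) (hAB : A ⊆ B) {j : V} (hj : j ∈ A) :
    f B - f (B.erase j) ≤ f A - f (A.erase j) := by
  have hunion : A ∪ B.erase j = B := by grind
  have hinter : A ∩ B.erase j = A.erase j := by grind
  have hsub := hf A (B.erase j)
  rwa [hunion, hinter, ← le_sub_iff_add_le, add_sub_right_comm, ← sub_le_iff_le_add] at hsub

theorem add_sum_sub_erase_le (hf : IsSubmodular f) (hAB : Disjoint A B) (hY : A ∪ B ⊆ Y) :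
    f A + ∑ j ∈ B, (f Y - f (Y.erase j)) ≤ f (A ∪ B) := by
  induction B using Finset.induction_on with
  | empty => simp
  | insert j B hj ih =>
    rw [Finset.disjoint_insert_right] at hAB
    rw [Finset.union_insert] at hY ⊢
    have hjAB : j ∉ A ∪ B := by simp [hAB.1, hj]
    have hlast : f Y - f (Y.erase j) ≤ f (insert j (A ∪ B)) - f (A ∪ B) := by
      simpa only [Finset.erase_insert hjAB] using
        hf.sub_erase_anti hY (Finset.mem_insert_self j (A ∪ B))
    calc f A + ∑ i ∈ insert j B, (f Y - f (Y.erase i))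
        = (f Y - f (Y.erase j)) + (f A + ∑ i ∈ B, (f Y - f (Y.erase i))) := by
          rw [Finset.sum_insert hj, add_left_comm]
      _ ≤ (f (insert j (A ∪ B)) - f (A ∪ B)) + f (A ∪ B) :=
          add_le_add hlast (ih hAB.2 ((Finset.subset_insert _ _).trans hY))
      _ = f (insert j (A ∪ B)) := sub_add_cancel _ _

end OrderedAddCommGroup

section CommRing

variable [CommRing K] [PartialOrder K] [IsOrderedAddMonoid K] {f : Finset V → K}
  {Y : Finset V} {c : K}

theorem singleton_add_mul_sum_erase_le (hf : IsSubmodular f)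
    (hc : ∀ j ∈ Y, c * f {j} ≤ f Y - f (Y.erase j)) {i : V} (hi : i ∈ Y) :
    f {i} + c * ∑ j ∈ Y.erase i, f {j} ≤ f Y := by
  have hY : {i} ∪ Y.erase i = Y := by rw [← Finset.insert_eq, Finset.insert_erase hi]
  calc f {i} + c * ∑ j ∈ Y.erase i, f {j}
      ≤ f {i} + ∑ j ∈ Y.erase i, (f Y - f (Y.erase j)) := by
        rw [Finset.mul_sum]
        gcongr with j hj
        exact hc j (Finset.mem_of_mem_erase hj)
    _ ≤ f ({i} ∪ Y.erase i) := hf.add_sum_sub_erase_le (by simp) hY.subset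
    _ = f Y := by rw [hY]

theorem one_add_card_sub_one_mul_sum_singleton_le (hf : IsSubmodular f)
    (hc : ∀ j ∈ Y, c * f {j} ≤ f Y - f (Y.erase j)) :
    (1 + ((Y.card : K) - 1) * c) * ∑ j ∈ Y, f {j} ≤ Y.card * f Y := by
  calc (1 + ((Y.card : K) - 1) * c) * ∑ j ∈ Y, f {j}
      = ∑ i ∈ Y, (f {i} + c * (∑ j ∈ Y, f {j} - f {i})) := by
        rw [Finset.sum_add_distrib, ← Finset.mul_sum, Finset.sum_sub_distrib, Finset.sum_const,
          nsmul_eq_mul]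
        ring
    _ = ∑ i ∈ Y, (f {i} + c * ∑ j ∈ Y.erase i, f {j}) :=
        Finset.sum_congr rfl fun i hi => by rw [Finset.sum_erase_eq_sub hi]
    _ ≤ Y.card • f Y :=
        Finset.sum_le_card_nsmul _ _ _ fun _ hi => hf.singleton_add_mul_sum_erase_le hc hi
    _ = Y.card * f Y := nsmul_eq_mul _ _

end CommRing

end IsSubmodular

section Curvature

variable [Field K] [LinearOrder K] {f : Finset V → K} {Y : Finset V}

/-- The curvature `κ_f(Y)`, measuring how far `f` is from being additive on `Y`; the nonemptiness
proof makes the minimum over `Y` meaningful, and the ratios are junk where `f {j} = 0`. -/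
def curvature (f : Finset V → K) (Y : Finset V) (hY : Y.Nonempty) : K :=
  1 - Y.inf' hY fun j => (f Y - f (Y.erase j)) / f {j}

theorem one_sub_curvature (hY : Y.Nonempty) :
    1 - curvature f Y hY = Y.inf' hY fun j => (f Y - f (Y.erase j)) / f {j} :=
  sub_sub_cancel _ _

variable [IsStrictOrderedRing K]

theorem curvature_le_one (hY : Y.Nonempty) (hsing : ∀ j ∈ Y, 0 < f {j})
    (herase : ∀ j ∈ Y, f (Y.erase j) ≤ f Y) : curvature f Y hY ≤ 1 := by
  rw [← sub_nonneg, one_sub_curvature]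
  exact Finset.le_inf' _ _ fun j hj => div_nonneg (sub_nonneg.2 (herase j hj)) (hsing j hj).le

theorem one_sub_curvature_mul_le (hY : Y.Nonempty) {j : V} (hj : j ∈ Y) (hsing : 0 < f {j}) :
    (1 - curvature f Y hY) * f {j} ≤ f Y - f (Y.erase j) := by
  rw [← le_div_iff₀ hsing, one_sub_curvature]
  exact Finset.inf'_le _ hj

theorem curvature_sandwich_general (hf : IsSubmodular f) (hempty : 0 ≤ f ∅) (hY : Y.Nonempty)
    (hsing : ∀ j ∈ Y, 0 < f {j}) (herase : ∀ j ∈ Y, f (Y.erase j) ≤ f Y) :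
    f Y ≤ ∑ j ∈ Y, f {j} ∧
      ∑ j ∈ Y, f {j} ≤ Y.card / (1 + ((Y.card : K) - 1) * (1 - curvature f Y hY)) * f Y := by
  refine ⟨hf.le_sum_singleton hempty hY, ?_⟩
  have hcard : (1 : K) ≤ Y.card := Nat.one_le_cast.2 hY.card_pos
  have hdenom : 0 < 1 + ((Y.card : K) - 1) * (1 - curvature f Y hY) :=
    add_pos_of_pos_of_nonneg one_pos <|
      mul_nonneg (sub_nonneg.2 hcard) (sub_nonneg.2 (curvature_le_one hY hsing herase))
  rw [div_mul_eq_mul_div, le_div_iff₀' hdenom]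
  exact hf.one_add_card_sub_one_mul_sum_singleton_le fun j hj =>
    one_sub_curvature_mul_le hY hj (hsing j hj)

end Curvature

end

/-- Curvature sandwich bound: for a normalized, monotone, submodular `f` and
nonempty `Y` with `f({j}) > 0` for all `j ∈ Y`, letting
`κ_f(Y) = 1 − min_{j ∈ Y} (f(Y) − f(Y\{j}))/f({j})`, we have
`f(Y) ≤ Σ_{j ∈ Y} f({j}) ≤ (|Y| / (1 + (|Y| − 1)(1 − κ_f(Y)))) · f(Y)`. -/
theorem curvature_sandwich
    {V : Type*} [Fintype V] [DecidableEq V] (f : Finset V → ℝ)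
    (hnorm : f ∅ = 0)
    (hmono : ∀ X Y : Finset V, X ⊆ Y → f X ≤ f Y)
    (hsubmod : ∀ X Y : Finset V, f (X ∪ Y) + f (X ∩ Y) ≤ f X + f Y)
    (Y : Finset V) (hY : Y.Nonempty) (hsing : ∀ j ∈ Y, 0 < f {j}) :
    let κ : ℝ := 1 - Y.inf' hY (fun j => (f Y - f (Y.erase j)) / f {j})
    f Y ≤ (∑ j ∈ Y, f {j}) ∧
    (∑ j ∈ Y, f {j}) ≤ ((Y.card : ℝ) / (1 + ((Y.card : ℝ) - 1) * (1 - κ))) * f Y := by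
  exact curvature_sandwich_general hsubmod hnorm.ge hY hsing
    fun j _ => hmono _ _ (Y.erase_subset j)
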